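/- arXiv:2302.03281 — 2 statements merged into one kernel-verified Lean document; each statement's English description precedes it below -/
import Mathlib

section
/- Let L : (Fin n → ℝ) → ℝ be three times continuously differentiable with iteratedFDeriv ℝ 3 L identically zero, and suppose the off-diagonal second derivatives of L vanish everywhere: for all x : Fin n → ℝ and all i i' : Fin n with i ≠ i', (fderiv ℝ (fun y => (fderiv ℝ L y) (Pi.single i' 1)) x) (Pi.single i 1) = 0. Then for every finite set S : Finset (Fin n) and every x : Fin n → ℝ, L (fun i => if i ∈ S then 0 else x i) - L x = ∑ i ∈ S, ( -((fderiv ℝ L x) (Pi.single i 1)) * (x i) + (1/2) * ((fderiv ℝ (fun y => (fderiv ℝ L y) (Pi.single i 1)) x) (Pi.single i 1)) * (x i)^2 ). -/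
/-!
A function whose third derivative vanishes is equal to its second-order Taylor polynomial at every
point. Removing the weights in `S` is the displacement `∑ i ∈ S, -xᵢ eᵢ`, on which the Hessian form
splits into its diagonal contributions because the mixed second derivatives vanish.
-/

section Algebra

variable {R ι : Type*}

theorem bilin_apply_sum_sum_of_pairwise_eq_zero {M N P : Type*} [CommSemiring R] [AddCommMonoid M]
    [AddCommMonoid N] [AddCommMonoid P] [Module R M] [Module R N] [Module R P]
    (B : M →ₗ[R] N →ₗ[R] P) {S : Finset ι} {v : ι → M} {w : ι → N}
    (h : (S : Set ι).Pairwise fun i j => B (v i) (w j) = 0) :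
    B (∑ i ∈ S, v i) (∑ j ∈ S, w j) = ∑ i ∈ S, B (v i) (w i) := by
  rw [LinearMap.map_sum₂]
  refine Finset.sum_congr rfl fun i hi => ?_
  rw [map_sum]
  exact Finset.sum_eq_single_of_mem i hi fun j hj hji => h hi hj hji.symm

theorem ite_mem_zero_eq_add_sum_neg_smul_single [Ring R] [DecidableEq ι]
    (S : Finset ι) (x : ι → R) :
    (fun i => if i ∈ S then 0 else x i) = x + ∑ i ∈ S, -x i • (Pi.single i 1 : ι → R) := by
  ext j
  by_cases hj : j ∈ S <;> simp [Finset.sum_apply, Pi.single_apply, hj]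

end Algebra

theorem fderiv_fderiv_apply_const {𝕜 E F : Type*} [NontriviallyNormedField 𝕜]
    [NormedAddCommGroup E] [NormedSpace 𝕜 E] [NormedAddCommGroup F] [NormedSpace 𝕜 F]
    {f : E → F} {x : E} (hf : DifferentiableAt 𝕜 (fderiv 𝕜 f) x) (v w : E) :
    fderiv 𝕜 (fun y => fderiv 𝕜 f y v) x w = fderiv 𝕜 (fderiv 𝕜 f) x w v := by
  simp [fderiv_clm_apply hf (differentiableAt_const v)]

section Taylor

variable {𝕜 E F : Type*} [RCLike 𝕜] [NormedAddCommGroup E] [NormedSpace 𝕜 E]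
  [NormedAddCommGroup F] [NormedSpace 𝕜 F] {f : E → F}

theorem iteratedFDeriv_eq_of_iteratedFDeriv_succ_eq_zero {n : ℕ}
    (hf : Differentiable 𝕜 (iteratedFDeriv 𝕜 n f))
    (hzero : ∀ x, iteratedFDeriv 𝕜 (n + 1) f x = 0) (x y : E) :
    iteratedFDeriv 𝕜 n f x = iteratedFDeriv 𝕜 n f y :=
  is_const_of_fderiv_eq_zero (𝕜 := 𝕜) hf
    (fun z => by rw [← norm_eq_zero, norm_fderiv_iteratedFDeriv, hzero, norm_zero]) x y

theorem fderiv_fderiv_eq_of_iteratedFDeriv_three_eq_zero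
    (hf : Differentiable 𝕜 (iteratedFDeriv 𝕜 2 f))
    (hzero : ∀ x, iteratedFDeriv 𝕜 3 f x = 0) (x y : E) :
    fderiv 𝕜 (fderiv 𝕜 f) x = fderiv 𝕜 (fderiv 𝕜 f) y := by
  have hconst := iteratedFDeriv_eq_of_iteratedFDeriv_succ_eq_zero hf hzero x y
  ext v w
  simpa [iteratedFDeriv_two_apply] using congr($hconst ![v, w])

theorem apply_add_of_fderiv_eq {A : E →L[𝕜] F} (hf : Differentiable 𝕜 f)
    (hA : ∀ x, fderiv 𝕜 f x = A) (x v : E) : f (x + v) = f x + A v := by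
  have hsub : f (x + v) - A (x + v) = f x - A x :=
    is_const_of_fderiv_eq_zero (𝕜 := 𝕜) (f := fun y => f y - A y) (hf.sub A.differentiable)
      (fun y => by rw [fderiv_fun_sub (hf y) A.differentiableAt, hA, A.fderiv, sub_self]) _ _
  rw [map_add, sub_eq_iff_eq_add] at hsub
  rw [hsub]
  abel

theorem apply_add_of_fderiv_fderiv_eq {B : E →L[𝕜] E →L[𝕜] F} (hf : Differentiable 𝕜 f)
    (hf' : Differentiable 𝕜 (fderiv 𝕜 f)) (hB : ∀ x, fderiv 𝕜 (fderiv 𝕜 f) x = B) (x v : E) :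
    f (x + v) = f x + (fderiv 𝕜 f x v + (1 / 2 : 𝕜) • B v v) := by
  let remainder (t : 𝕜) : F :=
    f (x + t • v) - (t • fderiv 𝕜 f x v + t ^ 2 • (1 / 2 : 𝕜) • B v v)
  have hderiv (t : 𝕜) : HasDerivAt remainder 0 t := by
    have hline : HasDerivAt (fun t : 𝕜 => x + t • v) v t := by
      simpa using ((hasDerivAt_id t).smul_const v).const_add x
    have hcomp := (hf (x + t • v)).hasFDerivAt.comp_hasDerivAt t hline
    have hpoly := ((hasDerivAt_id t).smul_const (fderiv 𝕜 f x v)).add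
      ((hasDerivAt_pow 2 t).smul_const ((1 / 2 : 𝕜) • B v v))
    refine (hcomp.sub hpoly).congr_deriv ?_
    have hfderiv : fderiv 𝕜 f (x + t • v) v = fderiv 𝕜 f x v + t • B v v := by
      simp [apply_add_of_fderiv_eq hf' hB]
    rw [hfderiv]
    push_cast
    module
  have hconst : remainder 1 = remainder 0 :=
    is_const_of_deriv_eq_zero (fun t => (hderiv t).differentiableAt) (fun t => (hderiv t).deriv) 1 0
  rw [← sub_eq_iff_eq_add]
  simpa [remainder] using hconst

theorem apply_add_sum_sub_of_pairwise_fderiv_fderiv_eq_zero {ι : Type*} {S : Finset ι}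
    {v : ι → E} {x : E} (hf : ContDiff 𝕜 3 f) (hzero : ∀ y, iteratedFDeriv 𝕜 3 f y = 0)
    (hv : (S : Set ι).Pairwise fun i j => fderiv 𝕜 (fderiv 𝕜 f) x (v i) (v j) = 0) :
    f (x + ∑ i ∈ S, v i) - f x =
      ∑ i ∈ S, (fderiv 𝕜 f x (v i) + (1 / 2 : 𝕜) • fderiv 𝕜 (fderiv 𝕜 f) x (v i) (v i)) := by
  have hf' : ContDiff 𝕜 2 (fderiv 𝕜 f) := hf.fderiv_right (by norm_num)
  have hconst (y : E) : fderiv 𝕜 (fderiv 𝕜 f) y = fderiv 𝕜 (fderiv 𝕜 f) x :=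
    fderiv_fderiv_eq_of_iteratedFDeriv_three_eq_zero
      (hf.differentiable_iteratedFDeriv (by norm_num)) hzero y x
  have hdiag : fderiv 𝕜 (fderiv 𝕜 f) x (∑ i ∈ S, v i) (∑ i ∈ S, v i) =
      ∑ i ∈ S, fderiv 𝕜 (fderiv 𝕜 f) x (v i) (v i) :=
    bilin_apply_sum_sum_of_pairwise_eq_zero (fderiv 𝕜 (fderiv 𝕜 f) x).toLinearMap₁₂ hv
  rw [apply_add_of_fderiv_fderiv_eq (hf.differentiable (by norm_num))
    (hf'.differentiable (by norm_num)) hconst, add_sub_cancel_left, hdiag, map_sum,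
    Finset.smul_sum, Finset.sum_add_distrib]

end Taylor

theorem group_utility_additive_general {𝕜 ι F : Type*} [RCLike 𝕜] [Fintype ι] [DecidableEq ι]
    [NormedAddCommGroup F] [NormedSpace 𝕜 F] {L : (ι → 𝕜) → F} {S : Finset ι} {x : ι → 𝕜}
    (hL : ContDiff 𝕜 3 L) (h3 : ∀ y, iteratedFDeriv 𝕜 3 L y = 0)
    (hoff : (S : Set ι).Pairwise fun i j =>
      fderiv 𝕜 (fun y => fderiv 𝕜 L y (Pi.single j 1)) x (Pi.single i 1) = 0) :
    L (fun i => if i ∈ S then 0 else x i) - L x =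
      ∑ i ∈ S, (-x i • fderiv 𝕜 L x (Pi.single i 1) + (1 / 2 * x i ^ 2) •
        fderiv 𝕜 (fun y => fderiv 𝕜 L y (Pi.single i 1)) x (Pi.single i 1)) := by
  have hL' : Differentiable 𝕜 (fderiv 𝕜 L) :=
    (hL.fderiv_right (m := 2) (by norm_num)).differentiable (by norm_num)
  simp only [fderiv_fderiv_apply_const (hL' x)] at hoff ⊢
  rw [ite_mem_zero_eq_add_sum_neg_smul_single,
    apply_add_sum_sub_of_pairwise_fderiv_fderiv_eq_zero hL h3
      fun i hi j hj hij => by simp [hoff hi hj hij]]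
  refine Finset.sum_congr rfl fun i _ => ?_
  simp only [map_smul, smul_apply]
  module

theorem group_utility_additive (n : ℕ) (L : (Fin n → ℝ) → ℝ)
    (hL : ContDiff ℝ 3 L)
    (h3 : ∀ x : Fin n → ℝ, iteratedFDeriv ℝ 3 L x = 0)
    (hoff : ∀ (x : Fin n → ℝ) (i i' : Fin n), i ≠ i' →
      (fderiv ℝ (fun y => (fderiv ℝ L y) (Pi.single i' 1)) x) (Pi.single i 1) = 0) :
    ∀ (S : Finset (Fin n)) (x : Fin n → ℝ),
      L (fun i => if i ∈ S then 0 else x i) - L x =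
        ∑ i ∈ S, (-((fderiv ℝ L x) (Pi.single i 1)) * (x i)
          + (1/2) * ((fderiv ℝ (fun y => (fderiv ℝ L y) (Pi.single i 1)) x)
              (Pi.single i 1)) * (x i)^2) := by
  intro S x
  rw [group_utility_additive_general hL h3 fun i _ j _ hij => hoff x i j hij]
  exact Finset.sum_congr rfl fun i _ => by simp only [smul_eq_mul]; ring
end

section
/- Let F : (Fin q → ℝ) → ℝ be twice continuously differentiable, σ : ℝ → ℝ be twice continuously differentiable, V : Matrix (Fin q) (Fin p) ℝ, W : Matrix (Fin p) (Fin n) ℝ, h : Fin n → ℝ, i : Fin p, j : Fin n. Suppose the off-diagonal second derivatives of F vanish everywhere: for all x : Fin q → ℝ and all distinct k k' : Fin q, (fderiv ℝ (fun y => (fderiv ℝ F y) (Pi.single k' 1)) x) (Pi.single k 1) = 0. Writing a = W.mulVec h and z = V.mulVec (fun i' => σ (a i')), then deriv (deriv (fun t => F (V.mulVec (fun i' => σ (((W.updateRow i (Function.update (W i) j t)).mulVec h) i'))))) (W i j) = (∑ k : Fin q, ( ((fderiv ℝ (fun y => (fderiv ℝ F y) (Pi.single k 1)) z) (Pi.single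 k 1)) * (V k i)^2 * (deriv σ (a i))^2 + ((fderiv ℝ F z) (Pi.single k 1)) * (V k i) * (deriv (deriv σ) (a i)) )) * (h j)^2. -/
/-!
Varying one weight `W i j` moves only the `i`-th activation input, affinely with slope `h j`; this
contributes the factor `h j ^ 2`. Varying the `i`-th activation input `s` moves the next layer from
`z = V *ᵥ (σ ∘ a)` to `z + (σ s - σ (a i)) • V.col i`, so the second-order chain rule gives the
Hessian at `z` on `V.col i` times `deriv σ (a i) ^ 2`, plus the derivative along `V.col i` times
`deriv (deriv σ) (a i)`. Expanding both in the standard basis, the vanishing mixed derivatives leave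
only the diagonal of the Hessian.
-/

open scoped Matrix

section Update

variable {R ι κ : Type*} [DecidableEq ι]

theorem update_eq_add_single {α : ι → Type*} [∀ i, AddCommGroup (α i)] (x : ∀ i, α i) (i : ι)
    (s : α i) : Function.update x i s = x + Pi.single i (s - x i) := by
  rw [Pi.update_eq_sub_add_single, Pi.single_sub]
  abel

theorem update_dotProduct [NonUnitalNonAssocRing R] [Fintype ι] (u v : ι → R) (j : ι) (t : R) :
    Function.update u j t ⬝ᵥ v = u ⬝ᵥ v + (t - u j) * v j := by
  rw [update_eq_add_single, add_dotProduct, single_dotProduct]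

theorem mulVec_update [CommRing R] [Fintype ι] (V : Matrix κ ι R) (x : ι → R) (i : ι) (s : R) :
    V *ᵥ Function.update x i s = V *ᵥ x + (s - x i) • V.col i := by
  rw [update_eq_add_single, Matrix.mulVec_add, Matrix.mulVec_single, op_smul_eq_smul]

theorem updateRow_update_mulVec [NonUnitalNonAssocRing R] [Fintype κ] [DecidableEq κ]
    (W : Matrix ι κ R) (h : κ → R) (i : ι) (j : κ) (t : R) :
    W.updateRow i (Function.update (W i) j t) *ᵥ h =
      Function.update (W *ᵥ h) i ((W *ᵥ h) i + (t - W i j) * h j) := by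
  rw [Matrix.updateRow_mulVec, update_dotProduct]
  rfl

end Update

section LinearMap

variable {R M ι : Type*} [AddCommMonoid M] [Fintype ι] [DecidableEq ι]

theorem apply_eq_sum_smul_single [Semiring R] [Module R M] (f : (ι → R) →ₗ[R] M) (v : ι → R) :
    f v = ∑ k, v k • f (Pi.single k 1) := by
  conv_lhs => rw [pi_eq_sum_univ' v, map_sum]
  simp only [map_smul]

theorem bilin_apply_self_eq_sum_of_offDiag_eq_zero [CommSemiring R] [Module R M]
    (B : (ι → R) →ₗ[R] (ι → R) →ₗ[R] M)
    (hB : ∀ k l, k ≠ l → B (Pi.single k 1) (Pi.single l 1) = 0) (v : ι → R) :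
    B v v = ∑ k, v k ^ 2 • B (Pi.single k 1) (Pi.single k 1) := by
  have hrow (k : ι) : B (Pi.single k 1) v = v k • B (Pi.single k 1) (Pi.single k 1) := by
    rw [apply_eq_sum_smul_single (B (Pi.single k 1))]
    exact Fintype.sum_eq_single k fun l hl => by rw [hB k l hl.symm, smul_zero]
  rw [← B.flip_apply, apply_eq_sum_smul_single (B.flip v)]
  simp only [LinearMap.flip_apply, hrow, smul_smul, sq]

end LinearMap

section Calculus

variable {𝕜 E G : Type*} [NontriviallyNormedField 𝕜]
  [NormedAddCommGroup E] [NormedSpace 𝕜 E] [NormedAddCommGroup G] [NormedSpace 𝕜 G]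

theorem deriv_comp_const_add_sub_mul (g : 𝕜 → G) (b w c x : 𝕜) :
    deriv (fun t => g (b + (t - w) * c)) x = c • deriv g (b + (x - w) * c) := by
  simp_rw [mul_comm _ c]
  rw [deriv_comp_sub_const (f := fun t => g (b + c * t)),
    deriv_comp_mul_left c (fun t => g (b + t)), deriv_comp_const_add]

theorem deriv_deriv_comp_const_add_sub_mul (g : 𝕜 → G) (b w c x : 𝕜) :
    deriv (deriv fun t => g (b + (t - w) * c)) x =
      c ^ 2 • deriv (deriv g) (b + (x - w) * c) := by
  simp_rw [funext (deriv_comp_const_add_sub_mul g b w c)]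
  rw [deriv_fun_const_smul_field, deriv_comp_const_add_sub_mul, smul_smul, sq]

theorem fderiv_fderiv_apply {F : E → G} {x : E} (hF : DifferentiableAt 𝕜 (fderiv 𝕜 F) x)
    (v w : E) :
    fderiv 𝕜 (fun y => fderiv 𝕜 F y v) x w = fderiv 𝕜 (fderiv 𝕜 F) x w v := by
  simp [fderiv_clm_apply hF (differentiableAt_const v)]

theorem fderiv_fderiv_apply_self_of_offDiag_eq_zero {κ : Type*} [Fintype κ] [DecidableEq κ]
    {F : (κ → 𝕜) → G} {z : κ → 𝕜} (hF : DifferentiableAt 𝕜 (fderiv 𝕜 F) z)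
    (hoff : ∀ k k' : κ, k ≠ k' →
      fderiv 𝕜 (fun y => fderiv 𝕜 F y (Pi.single k' 1)) z (Pi.single k 1) = 0)
    (v : κ → 𝕜) :
    fderiv 𝕜 (fderiv 𝕜 F) z v v =
      ∑ k, v k ^ 2 • fderiv 𝕜 (fun y => fderiv 𝕜 F y (Pi.single k 1)) z (Pi.single k 1) := by
  simp_rw [fderiv_fderiv_apply hF] at hoff ⊢
  exact bilin_apply_self_eq_sum_of_offDiag_eq_zero (fderiv 𝕜 (fderiv 𝕜 F) z).toLinearMap₁₂ hoff v

theorem deriv_deriv_comp_add_sub_smul {F : E → G} {f : 𝕜 → 𝕜} {x : E} {t : 𝕜}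
    (hF : ContDiffAt 𝕜 2 F x) (hf : ContDiffAt 𝕜 2 f t) (v : E) :
    deriv (deriv fun s => F (x + (f s - f t) • v)) t =
      deriv f t ^ 2 • fderiv 𝕜 (fderiv 𝕜 F) x v v + deriv (deriv f) t • fderiv 𝕜 F x v := by
  set γ : 𝕜 → E := fun s => x + (f s - f t) • v
  have hγt : γ t = x := by simp [γ]
  have hγ : ContDiffAt 𝕜 2 γ t :=
    contDiffAt_const.add ((hf.sub contDiffAt_const).smul contDiffAt_const)
  have hγ' : deriv γ =ᶠ[nhds t] fun s => deriv f s • v := by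
    filter_upwards [hf.eventually (by simp)] with s hs
    have hfs : DifferentiableAt 𝕜 f s := hs.differentiableAt two_ne_zero
    exact (((hfs.hasDerivAt.sub_const _).smul_const v).const_add x).deriv
  have hγ'' : deriv (deriv γ) t = deriv (deriv f) t • v := by
    have hf' : DifferentiableAt 𝕜 (deriv f) t :=
      (hf.derivWithin (m := 1) (by norm_num)).differentiableAt one_ne_zero
    rw [hγ'.deriv_eq, deriv_smul_const hf']
  have chain := iteratedDeriv_vcomp_two (hγt.symm ▸ hF) hγ
  simpa [iteratedDeriv_succ, iteratedDeriv_zero, iteratedFDeriv_two_apply, hγt, hγ'.eq_of_nhds,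
    hγ'', smul_smul, sq, Function.comp_def] using chain

end Calculus

section TwoLayer

variable {𝕜 G ι κ ν : Type*} [NontriviallyNormedField 𝕜] [NormedAddCommGroup G] [NormedSpace 𝕜 G]
  [DecidableEq ι]

theorem deriv_deriv_weight [Fintype ν] [DecidableEq ν] (Φ : (ι → 𝕜) → G) (W : Matrix ι ν 𝕜)
    (h : ν → 𝕜) (i : ι) (j : ν) :
    deriv (deriv fun t => Φ (W.updateRow i (Function.update (W i) j t) *ᵥ h)) (W i j) =
      h j ^ 2 • deriv (deriv fun s => Φ (Function.update (W *ᵥ h) i s)) ((W *ᵥ h) i) := by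
  simp_rw [updateRow_update_mulVec]
  rw [deriv_deriv_comp_const_add_sub_mul fun s => Φ (Function.update (W *ᵥ h) i s)]
  simp

variable [Fintype ι] [Fintype κ]

theorem deriv_deriv_activation {F : (κ → 𝕜) → G} {σ : 𝕜 → 𝕜} {V : Matrix κ ι 𝕜} {a : ι → 𝕜}
    {i : ι} (hF : ContDiffAt 𝕜 2 F (V *ᵥ fun l => σ (a l))) (hσ : ContDiffAt 𝕜 2 σ (a i)) :
    deriv (deriv fun s => F (V *ᵥ fun l => σ (Function.update a i s l))) (a i) =
      deriv σ (a i) ^ 2 •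
          fderiv 𝕜 (fderiv 𝕜 F) (V *ᵥ fun l => σ (a l)) (V.col i) (V.col i) +
        deriv (deriv σ) (a i) • fderiv 𝕜 F (V *ᵥ fun l => σ (a l)) (V.col i) := by
  have hslice (s : 𝕜) : V *ᵥ (fun l => σ (Function.update a i s l)) =
      V *ᵥ (fun l => σ (a l)) + (σ s - σ (a i)) • V.col i := by
    rw [← mulVec_update V (fun l => σ (a l))]
    exact congrArg (V *ᵥ ·) (Function.comp_update σ a i s)
  simp_rw [hslice]
  exact deriv_deriv_comp_add_sub_smul hF hσ (V.col i)

theorem deriv_deriv_activation_of_offDiag_eq_zero [DecidableEq κ] {F : (κ → 𝕜) → G} {σ : 𝕜 → 𝕜}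
    {V : Matrix κ ι 𝕜} {a : ι → 𝕜} {i : ι}
    (hF : ContDiffAt 𝕜 2 F (V *ᵥ fun l => σ (a l))) (hσ : ContDiffAt 𝕜 2 σ (a i))
    (hoff : ∀ k k' : κ, k ≠ k' →
      fderiv 𝕜 (fun y => fderiv 𝕜 F y (Pi.single k' 1)) (V *ᵥ fun l => σ (a l))
        (Pi.single k 1) = 0) :
    deriv (deriv fun s => F (V *ᵥ fun l => σ (Function.update a i s l))) (a i) =
      ∑ k, ((V k i ^ 2 * deriv σ (a i) ^ 2) •
          fderiv 𝕜 (fun y => fderiv 𝕜 F y (Pi.single k 1)) (V *ᵥ fun l => σ (a l))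
            (Pi.single k 1) +
        (V k i * deriv (deriv σ) (a i)) •
          fderiv 𝕜 F (V *ᵥ fun l => σ (a l)) (Pi.single k 1)) := by
  have hF' : DifferentiableAt 𝕜 (fderiv 𝕜 F) (V *ᵥ fun l => σ (a l)) :=
    (hF.fderiv_right (m := 1) (by norm_num)).differentiableAt one_ne_zero
  have gradient : fderiv 𝕜 F (V *ᵥ fun l => σ (a l)) (V.col i) =
      ∑ k, V k i • fderiv 𝕜 F (V *ᵥ fun l => σ (a l)) (Pi.single k 1) :=
    apply_eq_sum_smul_single (ContinuousLinearMap.toLinearMap _) _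
  rw [deriv_deriv_activation hF hσ, fderiv_fderiv_apply_self_of_offDiag_eq_zero hF' hoff,
    gradient, Finset.smul_sum, Finset.smul_sum, ← Finset.sum_add_distrib]
  simp only [Matrix.col_apply, smul_smul, mul_comm]

theorem two_layer_weight_second_derivative_general [DecidableEq κ] [Fintype ν] [DecidableEq ν]
    {F : (κ → 𝕜) → 𝕜} {σ : 𝕜 → 𝕜} {V : Matrix κ ι 𝕜} {W : Matrix ι ν 𝕜} {h : ν → 𝕜} {i : ι}
    (j : ν) (hF : ContDiffAt 𝕜 2 F (V *ᵥ fun l => σ ((W *ᵥ h) l)))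
    (hσ : ContDiffAt 𝕜 2 σ ((W *ᵥ h) i))
    (hoff : ∀ k k' : κ, k ≠ k' →
      fderiv 𝕜 (fun y => fderiv 𝕜 F y (Pi.single k' 1)) (V *ᵥ fun l => σ ((W *ᵥ h) l))
        (Pi.single k 1) = 0) :
    deriv (deriv fun t =>
        F (V *ᵥ fun l => σ ((W.updateRow i (Function.update (W i) j t) *ᵥ h) l))) (W i j) =
      (∑ k, (fderiv 𝕜 (fun y => fderiv 𝕜 F y (Pi.single k 1)) (V *ᵥ fun l => σ ((W *ᵥ h) l))
            (Pi.single k 1) * V k i ^ 2 * deriv σ ((W *ᵥ h) i) ^ 2 +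
          fderiv 𝕜 F (V *ᵥ fun l => σ ((W *ᵥ h) l)) (Pi.single k 1) * V k i *
            deriv (deriv σ) ((W *ᵥ h) i))) * h j ^ 2 := by
  rw [deriv_deriv_weight fun x => F (V *ᵥ fun l => σ (x l)),
    deriv_deriv_activation_of_offDiag_eq_zero hF hσ hoff, smul_eq_mul, mul_comm]
  congr! 2 with k
  simp only [smul_eq_mul]
  ring

end TwoLayer

theorem two_layer_weight_second_derivative (q p n : ℕ) (F : (Fin q → ℝ) → ℝ) (σ : ℝ → ℝ)
    (hF : ContDiff ℝ 2 F) (hσ : ContDiff ℝ 2 σ)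
    (V : Matrix (Fin q) (Fin p) ℝ) (W : Matrix (Fin p) (Fin n) ℝ)
    (h : Fin n → ℝ) (i : Fin p) (j : Fin n)
    (hoff : ∀ (x : Fin q → ℝ) (k k' : Fin q), k ≠ k' →
      (fderiv ℝ (fun y => (fderiv ℝ F y) (Pi.single k' 1)) x) (Pi.single k 1) = 0) :
    deriv (deriv (fun t : ℝ =>
        F (V.mulVec (fun i' => σ (((W.updateRow i (Function.update (W i) j t)).mulVec h) i')))))
        (W i j) =
      (∑ k : Fin q,
        (((fderiv ℝ (fun y => (fderiv ℝ F y) (Pi.single k 1))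
            (V.mulVec (fun i' => σ ((W.mulVec h) i')))) (Pi.single k 1))
          * (V k i)^2 * (deriv σ ((W.mulVec h) i))^2
        + ((fderiv ℝ F (V.mulVec (fun i' => σ ((W.mulVec h) i')))) (Pi.single k 1))
          * (V k i) * (deriv (deriv σ) ((W.mulVec h) i))))
        * (h j)^2 :=
  two_layer_weight_second_derivative_general j hF.contDiffAt hσ.contDiffAt (hoff _)
end
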